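/- arXiv:1909.03870 — 2 statements merged into one kernel-verified Lean document; each statement's English description precedes it below -/
import Mathlib

section
/- Let μ̌ ∈ 𝒫(ℝ)^{dT} satisfy ℳ_ε(μ̌) ≠ ∅ for some ε ≥ 0, and let μ̌' ∈ 𝒫(ℝ)^{dT} be arbitrary. Set r := 2 max_{1≤t≤T} Σ_{1≤i≤d} 𝒲₁(μ'_{t,i}, μ_{t,i}). Then ℳ_{ε+r}(μ̌') ≠ ∅. Moreover, if the cost c is L-Lipschitz, then P̄_ε(μ̌) ≤ P̄_{ε+r}(μ̌') + LTr/2 and P̲_ε(μ̌) ≥ P̲_{ε+r}(μ̌') − LTr/2. -/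
open MeasureTheory Filter

namespace MMOT

/-- Path space `𝒳 = (ℝ^d)^T`. -/
abbrev Path (T d : ℕ) := Fin T → Fin d → ℝ

/-- σ-algebra generated by the coordinates `X_0, …, X_t` (0-indexed). -/
noncomputable def pastSigma (T d : ℕ) (t : ℕ) : MeasurableSpace (Path T d) :=
  ⨆ s : Fin T, ⨆ _ : (s : ℕ) ≤ t, MeasurableSpace.comap (fun x => x s) inferInstance

def HasMarginals {T d : ℕ} (π : Measure (Path T d)) (μ : Fin T → Fin d → Measure ℝ) : Prop :=
  ∀ t i, π.map (fun x => x t i) = μ t i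

/-- `E_π[X_{t+1,i} | X_0,…,X_t]`. -/
noncomputable def condNext {T d : ℕ} (π : Measure (Path T d)) (t : ℕ) (ht : t + 1 < T)
    (i : Fin d) : Path T d → ℝ :=
  π[fun x => x ⟨t + 1, ht⟩ i | pastSigma T d t]

/-- The relaxed set `ℳ_ε(μ̌)`: calibrated measures whose martingale defect is at most `ε`. -/
def MartSetEps {T d : ℕ} (μ : Fin T → Fin d → Measure ℝ) (ε : ℝ) :
    Set (Measure (Path T d)) :=
  {π | IsProbabilityMeasure π ∧ HasMarginals π μ ∧
    ∀ (t : ℕ) (ht : t + 1 < T),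
      ∫ x, ∑ i, |condNext π t ht i x - x ⟨t, Nat.lt_of_succ_lt ht⟩ i| ∂π ≤ ε}

def primalVals {T d : ℕ} (c : Path T d → ℝ) (S : Set (Measure (Path T d))) : Set ℝ :=
  {r | ∃ π ∈ S, Integrable c π ∧ r = ∫ x, c x ∂π}

noncomputable def PbarEps {T d : ℕ} (μ : Fin T → Fin d → Measure ℝ) (c : Path T d → ℝ)
    (ε : ℝ) : ℝ :=
  sSup (primalVals c (MartSetEps μ ε))

noncomputable def PlowEps {T d : ℕ} (μ : Fin T → Fin d → Measure ℝ) (c : Path T d → ℝ)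
    (ε : ℝ) : ℝ :=
  sInf (primalVals c (MartSetEps μ ε))

/-- Wasserstein-1 distance on probability measures on `ℝ`. -/
noncomputable def W1R (μ ν : Measure ℝ) : ℝ :=
  sInf {r | ∃ γ : Measure (ℝ × ℝ), IsProbabilityMeasure γ ∧ γ.map Prod.fst = μ ∧
    γ.map Prod.snd = ν ∧ Integrable (fun p => |p.1 - p.2|) γ ∧
    r = ∫ p, |p.1 - p.2| ∂γ}

/-- Lipschitz continuity with respect to the `ℓ¹`-norm on the path space. -/
def LipschitzCost {T d : ℕ} (L : ℝ) (c : Path T d → ℝ) : Prop :=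
  ∀ x y, |c x - c y| ≤ L * ∑ t, ∑ i, |x t i - y t i|

/-!
Move the marginals of a path `x` one coordinate at a time: replace `x_{t,i}` by a sample of the
second component of an optimal `𝒲₁` plan from `μ_{t,i}` to `μ'_{t,i}`, conditionally on the first
component being `x_{t,i}`. All the sampling is done with one uniform variable independent of the
path; the joint law of the samples is irrelevant, only independence matters. The new path `Y` is
then causal: up to time `t` it is a function of the old path up to time `t` and of the uniform
variable, and the latter leaves the conditional expectations of the old path unchanged. Conditioning
on the coarser past of `Y` contracts the `L¹` norm, so the martingale defect at time `t` grows by at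
most the mean displacements at times `t` and `t + 1`, and an `L`-Lipschitz cost changes in mean by
at most `L` times the total displacement.

On the line, the comonotone coupling is optimal because each level `z` separates the two components
with probability at least `|F(z) - G(z)|` under any coupling of distributions with cdfs `F` and `G`,
with equality for the comonotone one, and `|x - y|` is the length of the set of levels separating
`x` from `y`.
-/

section Wasserstein

open ProbabilityTheory Set Topology
open scoped symmDiff

/-- The quantile function (generalised inverse of the distribution function) of `μ`; meaningful
only at levels in `(0, 1)`, since `sInf` takes the value `0` on `∅` and on `univ`. -/
noncomputable def quantile (μ : Measure ℝ) (u : ℝ) : ℝ :=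
  sInf {x | u ≤ cdf μ x}

lemma quantile_le_iff (μ : Measure ℝ) {u : ℝ} (hu : u ∈ Ioo (0 : ℝ) 1) (z : ℝ) :
    quantile μ u ≤ z ↔ u ≤ cdf μ z := by
  have nonempty : {x | u ≤ cdf μ x}.Nonempty := by
    obtain ⟨x, hx⟩ := ((tendsto_cdf_atTop μ).eventually (eventually_gt_nhds hu.2)).exists
    exact ⟨x, hx.le⟩
  have bddBelow : BddBelow {x | u ≤ cdf μ x} := by
    obtain ⟨b, hb⟩ := ((tendsto_cdf_atBot μ).eventually (eventually_lt_nhds hu.1)).exists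
    exact ⟨b, fun x (hx : u ≤ cdf μ x) =>
      ((monotone_cdf μ).reflect_lt (hb.trans_le hx)).le⟩
  refine ⟨fun h => ?_, fun h => csInf_le bddBelow h⟩
  have right_lim : Tendsto (cdf μ) (𝓝[>] quantile μ u) (𝓝 (cdf μ (quantile μ u))) :=
    continuousWithinAt_Ioi_iff_Ici.mpr ((cdf μ).right_continuous (quantile μ u))
  refine le_trans (ge_of_tendsto right_lim ?_) (monotone_cdf μ h)
  refine eventually_nhdsWithin_of_forall fun x hx => ?_
  obtain ⟨a, ha, hax⟩ := exists_lt_of_csInf_lt nonempty hx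
  exact le_trans ha (monotone_cdf μ hax.le)

lemma monotoneOn_quantile (μ : Measure ℝ) : MonotoneOn (quantile μ) (Ioo 0 1) := by
  intro u hu v hv huv
  rw [quantile_le_iff μ hu]
  exact huv.trans ((quantile_le_iff μ hv _).1 le_rfl)

lemma aemeasurable_quantile (μ : Measure ℝ) :
    AEMeasurable (quantile μ) (volume.restrict (Ioo 0 1)) :=
  aemeasurable_restrict_of_monotoneOn measurableSet_Ioo (monotoneOn_quantile μ)

instance : IsProbabilityMeasure ((volume : Measure ℝ).restrict (Ioo 0 1)) := ⟨by simp⟩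

lemma map_quantile (μ : Measure ℝ) [IsProbabilityMeasure μ] :
    (volume.restrict (Ioo 0 1)).map (quantile μ) = μ := by
  have := Measure.isProbabilityMeasure_map (aemeasurable_quantile μ)
  refine Measure.ext_of_Iic _ _ fun z => ?_
  have sublevel : quantile μ ⁻¹' Iic z ∩ Ioo 0 1 = Iic (cdf μ z) ∩ Ioo 0 1 := by
    ext u
    exact and_congr_left fun hu => quantile_le_iff μ hu z
  rw [Measure.map_apply_of_aemeasurable (aemeasurable_quantile μ) measurableSet_Iic,
    Measure.restrict_apply' measurableSet_Ioo, sublevel, ← ofReal_cdf]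
  apply le_antisymm
  · calc volume (Iic (cdf μ z) ∩ Ioo 0 1) ≤ volume (Ioc 0 (cdf μ z)) :=
          measure_mono fun u hu => ⟨hu.2.1, hu.1⟩
      _ = ENNReal.ofReal (cdf μ z) := by simp
  · calc ENNReal.ofReal (cdf μ z) = volume (Ioo 0 (cdf μ z)) := by simp
      _ ≤ volume (Iic (cdf μ z) ∩ Ioo 0 1) :=
          measure_mono fun u hu => ⟨hu.2.le, hu.1, hu.2.trans_le (cdf_le_one μ z)⟩

/-- The comonotone coupling of `μ` and `ν`, which is optimal for the cost `|x - y|`. -/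
noncomputable def quantileCoupling (μ ν : Measure ℝ) : Measure (ℝ × ℝ) :=
  (volume.restrict (Ioo 0 1)).map fun u => (quantile μ u, quantile ν u)

lemma aemeasurable_quantile_prodMk (μ ν : Measure ℝ) :
    AEMeasurable (fun u => (quantile μ u, quantile ν u)) (volume.restrict (Ioo 0 1)) :=
  (aemeasurable_quantile μ).prodMk (aemeasurable_quantile ν)

instance (μ ν : Measure ℝ) : IsProbabilityMeasure (quantileCoupling μ ν) :=
  Measure.isProbabilityMeasure_map (aemeasurable_quantile_prodMk μ ν)

lemma map_fst_quantileCoupling (μ ν : Measure ℝ) [IsProbabilityMeasure μ] :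
    (quantileCoupling μ ν).map Prod.fst = μ := by
  rw [quantileCoupling, AEMeasurable.map_map_of_aemeasurable measurable_fst.aemeasurable
    (aemeasurable_quantile_prodMk μ ν)]
  exact map_quantile μ

lemma map_snd_quantileCoupling (μ ν : Measure ℝ) [IsProbabilityMeasure ν] :
    (quantileCoupling μ ν).map Prod.snd = ν := by
  rw [quantileCoupling, AEMeasurable.map_map_of_aemeasurable measurable_snd.aemeasurable
    (aemeasurable_quantile_prodMk μ ν)]
  exact map_quantile ν

/-- The pairs of reals separated by the level `z`. -/
def separatedBy (z : ℝ) : Set (ℝ × ℝ) := (Prod.fst ⁻¹' Iic z) ∆ (Prod.snd ⁻¹' Iic z)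

lemma measurableSet_separatedBy (z : ℝ) : MeasurableSet (separatedBy z) :=
  (measurable_fst measurableSet_Iic).symmDiff (measurable_snd measurableSet_Iic)

lemma lintegral_abs_sub_eq_lintegral_separatedBy (γ : Measure (ℝ × ℝ)) [SFinite γ] :
    ∫⁻ p, ENNReal.ofReal |p.1 - p.2| ∂γ = ∫⁻ z, γ (separatedBy z) := by
  have meas : MeasurableSet {q : (ℝ × ℝ) × ℝ | q.1 ∈ separatedBy q.2} := by
    have below_fst : MeasurableSet {q : (ℝ × ℝ) × ℝ | q.1.1 ≤ q.2} :=
      measurableSet_le (by fun_prop) (by fun_prop)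
    have below_snd : MeasurableSet {q : (ℝ × ℝ) × ℝ | q.1.2 ≤ q.2} :=
      measurableSet_le (by fun_prop) (by fun_prop)
    exact below_fst.symmDiff below_snd
  have levels (p : ℝ × ℝ) : {z | p ∈ separatedBy z} = Ico (min p.1 p.2) (max p.1 p.2) := by
    ext z
    simp only [separatedBy, mem_symmDiff, mem_preimage, mem_Iic, mem_ofPred_eq, mem_Ico,
      min_le_iff, lt_max_iff]
    grind
  calc ∫⁻ p, ENNReal.ofReal |p.1 - p.2| ∂γ = ∫⁻ p, volume {z | p ∈ separatedBy z} ∂γ := by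
        simp only [levels, Real.volume_Ico, max_sub_min_eq_abs']
    _ = (γ.prod volume) {q : (ℝ × ℝ) × ℝ | q.1 ∈ separatedBy q.2} :=
        (Measure.prod_apply meas).symm
    _ = ∫⁻ z, γ (separatedBy z) := Measure.prod_apply_symm meas

lemma abs_cdf_sub_le_measure_separatedBy {μ ν : Measure ℝ} {γ : Measure (ℝ × ℝ)}
    [IsProbabilityMeasure γ] (hfst : γ.map Prod.fst = μ) (hsnd : γ.map Prod.snd = ν) (z : ℝ) :
    ENNReal.ofReal |cdf μ z - cdf ν z| ≤ γ (separatedBy z) := by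
  have := Measure.isProbabilityMeasure_map (μ := γ) measurable_fst.aemeasurable
  have := Measure.isProbabilityMeasure_map (μ := γ) measurable_snd.aemeasurable
  subst hfst hsnd
  rw [← ofReal_measureReal, cdf_eq_real, cdf_eq_real,
    map_measureReal_apply measurable_fst measurableSet_Iic,
    map_measureReal_apply measurable_snd measurableSet_Iic]
  exact ENNReal.ofReal_le_ofReal <| abs_measureReal_sub_le_measureReal_symmDiff
    (measurable_fst measurableSet_Iic).nullMeasurableSet
    (measurable_snd measurableSet_Iic).nullMeasurableSet

lemma quantileCoupling_separatedBy_le (μ ν : Measure ℝ) (z : ℝ) :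
    quantileCoupling μ ν (separatedBy z) ≤ ENNReal.ofReal |cdf μ z - cdf ν z| := by
  rw [quantileCoupling, Measure.map_apply_of_aemeasurable (aemeasurable_quantile_prodMk μ ν)
    (measurableSet_separatedBy z), Measure.restrict_apply' measurableSet_Ioo, abs_sub_comm,
    ← Real.volume_uIoc]
  refine measure_mono fun u ⟨hsep, hu⟩ => ?_
  simp only [separatedBy, mem_preimage, mem_symmDiff, mem_Iic, quantile_le_iff _ hu] at hsep
  rw [mem_uIoc]
  grind

lemma lintegral_quantileCoupling_le {μ ν : Measure ℝ} {γ : Measure (ℝ × ℝ)}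
    [IsProbabilityMeasure γ] (hfst : γ.map Prod.fst = μ) (hsnd : γ.map Prod.snd = ν) :
    ∫⁻ p, ENNReal.ofReal |p.1 - p.2| ∂quantileCoupling μ ν ≤
      ∫⁻ p, ENNReal.ofReal |p.1 - p.2| ∂γ := by
  simp only [lintegral_abs_sub_eq_lintegral_separatedBy]
  exact lintegral_mono fun z => (quantileCoupling_separatedBy_le μ ν z).trans
    (abs_cdf_sub_le_measure_separatedBy hfst hsnd z)

lemma W1R_nonneg (μ ν : Measure ℝ) : 0 ≤ W1R μ ν := by
  refine Real.sInf_nonneg ?_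
  rintro _ ⟨γ, -, -, -, -, rfl⟩
  exact integral_nonneg fun p => abs_nonneg _

lemma integral_quantileCoupling_eq_W1R (μ ν : Measure ℝ) [IsProbabilityMeasure μ]
    [IsProbabilityMeasure ν] (hμ : Integrable (fun y => y) μ) (hν : Integrable (fun y => y) ν) :
    ∫ p, |p.1 - p.2| ∂quantileCoupling μ ν = W1R μ ν := by
  have hfst := map_fst_quantileCoupling μ ν
  have hsnd := map_snd_quantileCoupling μ ν
  have integrable : Integrable (fun p => |p.1 - p.2|) (quantileCoupling μ ν) := by
    rw [← hfst] at hμ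
    rw [← hsnd] at hν
    exact ((hμ.comp_measurable measurable_fst).sub (hν.comp_measurable measurable_snd)).abs
  refine Eq.symm (IsLeast.csInf_eq ?_)
  refine ⟨⟨_, inferInstance, hfst, hsnd, integrable, rfl⟩, ?_⟩
  rintro _ ⟨γ, hγ, hγfst, hγsnd, hγint, rfl⟩
  have toReal_lintegral (η : Measure (ℝ × ℝ)) :
      ∫ p, |p.1 - p.2| ∂η = (∫⁻ p, ENNReal.ofReal |p.1 - p.2| ∂η).toReal :=
    integral_eq_lintegral_of_nonneg_ae (ae_of_all _ fun p => abs_nonneg _)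
      (by fun_prop)
  rw [toReal_lintegral, toReal_lintegral]
  exact ENNReal.toReal_mono hγint.lintegral_lt_top.ne (lintegral_quantileCoupling_le hγfst hγsnd)

open unitInterval

lemma exists_measurable_map_prodMk_eq {α β : Type*} [MeasurableSpace α] [MeasurableSpace β]
    [StandardBorelSpace β] [Nonempty β] (ρ : Measure (α × β)) [IsFiniteMeasure ρ] :
    ∃ f : α × I → β, Measurable f ∧
      (ρ.fst.prod volume).map (fun p => (p.1, f p)) = ρ := by
  obtain ⟨f, hf, map_f⟩ := Kernel.exists_measurable_map_eq_unitInterval ρ.condKernel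
  refine ⟨Function.uncurry f, hf, ?_⟩
  have hpair : Measurable fun p : α × I => (p.1, Function.uncurry f p) := measurable_fst.prodMk hf
  conv_rhs => rw [← ρ.disintegrate ρ.condKernel]
  ext s hs
  rw [Measure.map_apply hpair hs, Measure.prod_apply (hpair hs), Measure.compProd_apply hs]
  refine lintegral_congr fun a => ?_
  rw [← map_f, Measure.map_apply hf.of_uncurry_left (measurable_prodMk_left hs)]
  rfl

lemma exists_measurable_map_eq_integral_eq_W1R (μ ν : Measure ℝ) [IsProbabilityMeasure μ]
    [IsProbabilityMeasure ν] (hμ : Integrable (fun y => y) μ) (hν : Integrable (fun y => y) ν) :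
    ∃ g : ℝ × I → ℝ, Measurable g ∧ (μ.prod volume).map g = ν ∧
      ∫ p, |g p - p.1| ∂(μ.prod volume) = W1R ν μ := by
  set γ := quantileCoupling ν μ
  obtain ⟨g, hg, map_g⟩ := exists_measurable_map_prodMk_eq (γ.map Prod.swap)
  have hpair : Measurable fun p : ℝ × I => (p.1, g p) := measurable_fst.prodMk hg
  rw [Measure.fst_map_swap, Measure.snd, map_snd_quantileCoupling] at map_g
  refine ⟨g, hg, ?_, ?_⟩
  · calc (μ.prod volume).map g = ((μ.prod volume).map fun p => (p.1, g p)).snd :=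
          (Measure.map_map measurable_snd hpair).symm
      _ = ν := by rw [map_g, Measure.snd_map_swap, Measure.fst, map_fst_quantileCoupling]
  · calc ∫ p, |g p - p.1| ∂(μ.prod volume)
        = ∫ q, |q.2 - q.1| ∂(μ.prod volume).map fun p => (p.1, g p) :=
          (integral_map (f := fun q : ℝ × ℝ => |q.2 - q.1|) hpair.aemeasurable (by fun_prop)).symm
      _ = ∫ p, |p.1 - p.2| ∂γ := by
          rw [map_g, integral_map measurable_swap.aemeasurable (by fun_prop)]
          rfl
      _ = W1R ν μ := integral_quantileCoupling_eq_W1R ν μ hν hμ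

end Wasserstein

section ConditionalExpectation

variable {Ω Ω' E : Type*} [NormedAddCommGroup E] [NormedSpace ℝ E]

lemma setIntegral_prod_comp_fst [MeasurableSpace Ω] [MeasurableSpace Ω'] {P : Measure Ω}
    {Q : Measure Ω'} [SFinite P] [IsFiniteMeasure Q] {f : Ω → E} (hf : Integrable f P)
    {s : Set (Ω × Ω')} (hs : MeasurableSet s) :
    ∫ p in s, f p.1 ∂(P.prod Q) = ∫ b, ∫ a in (·, b) ⁻¹' s, f a ∂P ∂Q := by
  rw [← integral_indicator hs, integral_prod_symm _ ((hf.comp_fst Q).indicator hs)]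
  refine integral_congr_ae (ae_of_all _ fun b => ?_)
  exact integral_indicator (measurable_prodMk_right hs)

variable [CompleteSpace E]

lemma condExp_map_comp_ae_eq [MeasurableSpace Ω] {m mΩ' : MeasurableSpace Ω'} (hm : m ≤ mΩ')
    {P : Measure Ω} [IsFiniteMeasure P] {Y : Ω → Ω'} (hY : Measurable Y) {f : Ω' → E}
    (hf : Integrable f (P.map Y)) :
    (fun ω => ((P.map Y)[f | m]) (Y ω)) =ᵐ[P] P[fun ω => f (Y ω) | m.comap Y] := by
  have hcomap : m.comap Y ≤ ‹MeasurableSpace Ω› :=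
    (MeasurableSpace.comap_mono hm).trans hY.comap_le
  refine ae_eq_condExp_of_forall_setIntegral_eq hcomap (hf.comp_measurable hY)
    (fun s _ _ => (integrable_condExp.comp_measurable hY).integrableOn) ?_
    (stronglyMeasurable_condExp.comp_measurable (comap_measurable Y)).aestronglyMeasurable
  rintro _ ⟨s, hs, rfl⟩ -
  rw [← setIntegral_map (hm s hs) integrable_condExp.aestronglyMeasurable hY.aemeasurable,
    ← setIntegral_map (hm s hs) hf.aestronglyMeasurable hY.aemeasurable,
    setIntegral_condExp hm hf hs]

lemma condExp_prod_comp_fst_ae_eq {m mΩ : MeasurableSpace Ω} [mΩ' : MeasurableSpace Ω']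
    (hm : m ≤ mΩ) {P : Measure Ω} {Q : Measure Ω'} [IsFiniteMeasure P] [IsFiniteMeasure Q]
    {f : Ω → E} (hf : Integrable f P) :
    (fun p => (P[f | m]) p.1) =ᵐ[P.prod Q] (P.prod Q)[fun p => f p.1 | m.prod mΩ'] := by
  have hprod : m.prod mΩ' ≤ mΩ.prod mΩ' := sup_le_sup_right (MeasurableSpace.comap_mono hm) _
  refine ae_eq_condExp_of_forall_setIntegral_eq hprod (hf.comp_fst Q)
    (fun s _ _ => (integrable_condExp.comp_fst Q).integrableOn) (fun s hs _ => ?_)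
    (stronglyMeasurable_condExp.comp_measurable
      (@measurable_fst _ _ m mΩ')).aestronglyMeasurable
  rw [setIntegral_prod_comp_fst integrable_condExp (hprod s hs),
    setIntegral_prod_comp_fst hf (hprod s hs)]
  refine integral_congr_ae (ae_of_all _ fun b => ?_)
  exact setIntegral_condExp hm hf (@measurable_prodMk_right _ _ m mΩ' b s hs)

-- With `Z = P[X₁ | m₂] - X₀ + (Y₁ - X₁) - (Y₀ - X₀)`, the tower property gives
-- `P[Y₁ | m₁] - Y₀ = P[Z | m₁]`, and conditioning contracts the `L¹` norm.
lemma integral_abs_condExp_sub_le {m₁ m₂ m₀ : MeasurableSpace Ω} (h₁₂ : m₁ ≤ m₂) (h₂ : m₂ ≤ m₀)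
    {P : Measure Ω} [IsFiniteMeasure P] {X₀ X₁ Y₀ Y₁ : Ω → ℝ} (hX₀ : Integrable X₀ P)
    (hX₁ : Integrable X₁ P) (hY₀ : Integrable Y₀ P) (hY₁ : Integrable Y₁ P)
    (hY₀m : StronglyMeasurable[m₁] Y₀) :
    ∫ ω, |(P[Y₁ | m₁]) ω - Y₀ ω| ∂P ≤
      ∫ ω, |(P[X₁ | m₂]) ω - X₀ ω| ∂P + ∫ ω, |Y₁ ω - X₁ ω| ∂P + ∫ ω, |Y₀ ω - X₀ ω| ∂P := by
  set D : Ω → ℝ := P[X₁ | m₂] - X₀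
  have hD : Integrable D P := integrable_condExp.sub hX₀
  have hZ₁ : Integrable (fun ω => |Y₁ ω - X₁ ω|) P := (hY₁.sub hX₁).abs
  have hZ₀ : Integrable (fun ω => |Y₀ ω - X₀ ω|) P := (hY₀.sub hX₀).abs
  have tower : P[D + (Y₁ - X₁) - (Y₀ - X₀) | m₁] =ᵐ[P] P[Y₁ | m₁] - Y₀ := by
    filter_upwards [condExp_sub (hD.add (hY₁.sub hX₁)) (hY₀.sub hX₀) m₁,
      condExp_add hD (hY₁.sub hX₁) m₁, condExp_sub integrable_condExp hX₀ m₁,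
      condExp_sub hY₁ hX₁ m₁, condExp_sub hY₀ hX₀ m₁,
      condExp_condExp_of_le (μ := P) (f := X₁) h₁₂ h₂] with ω e₁ e₂ e₃ e₄ e₅ e₆
    rw [condExp_of_stronglyMeasurable (h₁₂.trans h₂) hY₀m hY₀] at e₅
    simp only [Pi.sub_apply, Pi.add_apply] at *
    linarith
  calc ∫ ω, |(P[Y₁ | m₁]) ω - Y₀ ω| ∂P
      = ∫ ω, |(P[D + (Y₁ - X₁) - (Y₀ - X₀) | m₁]) ω| ∂P :=
        integral_congr_ae (tower.mono fun ω hω => congrArg abs hω.symm)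
    _ ≤ ∫ ω, |D ω + (Y₁ ω - X₁ ω) - (Y₀ ω - X₀ ω)| ∂P := integral_abs_condExp_le _
    _ ≤ ∫ ω, (|D ω| + |Y₁ ω - X₁ ω| + |Y₀ ω - X₀ ω|) ∂P :=
        integral_mono ((hD.add (hY₁.sub hX₁)).sub (hY₀.sub hX₀)).abs
          ((hD.abs.add hZ₁).add hZ₀)
          fun ω => (abs_sub _ _).trans (by gcongr; exact abs_add_le _ _)
    _ = ∫ ω, |D ω| ∂P + ∫ ω, |Y₁ ω - X₁ ω| ∂P + ∫ ω, |Y₀ ω - X₀ ω| ∂P := by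
        rw [integral_add (by exact hD.abs.add hZ₁) hZ₀, integral_add hD.abs hZ₁]

end ConditionalExpectation

section PathSpace

variable {T d : ℕ} {μ μ' : Fin T → Fin d → Measure ℝ} {π : Measure (Path T d)}

lemma pastSigma_le (T d t : ℕ) : pastSigma T d t ≤ MeasurableSpace.pi :=
  iSup₂_le fun s _ => (measurable_pi_apply s).comap_le

lemma measurable_pastSigma_iff {Ω : Type*} {m : MeasurableSpace Ω} {t : ℕ} {Y : Ω → Path T d} :
    Measurable[m, pastSigma T d t] Y ↔ ∀ s : Fin T, (s : ℕ) ≤ t → Measurable[m] fun ω => Y ω s := by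
  simp only [measurable_iff_comap_le, pastSigma, MeasurableSpace.comap_iSup,
    MeasurableSpace.comap_comp, iSup_le_iff]
  rfl

lemma measurable_eval_pastSigma {t : ℕ} {s : Fin T} (hs : (s : ℕ) ≤ t) :
    Measurable[pastSigma T d t] fun x : Path T d => x s :=
  measurable_pastSigma_iff.1 (@measurable_id _ (pastSigma T d t)) s hs

lemma HasMarginals.integrable_eval (hπ : HasMarginals π μ) {t : Fin T} {i : Fin d}
    (hμ : Integrable (fun y => y) (μ t i)) : Integrable (fun x => x t i) π := by
  rw [← hπ t i] at hμ
  exact hμ.comp_measurable (by fun_prop)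

lemma integral_sum_abs_condNext_sub (hπ : ∀ t i, Integrable (fun x => x t i) π) {t : ℕ}
    (ht : t + 1 < T) :
    ∫ x, ∑ i, |condNext π t ht i x - x ⟨t, Nat.lt_of_succ_lt ht⟩ i| ∂π =
      ∑ i, ∫ x, |condNext π t ht i x - x ⟨t, Nat.lt_of_succ_lt ht⟩ i| ∂π :=
  integral_finsetSum _ fun i _ => (integrable_condExp.sub (hπ _ i)).abs

/-- A transformation of paths driven by an extra parameter in `U` is causal if its output up to each
time is a measurable function of the parameter and of the input up to that time. -/
def IsCausal {U : Type*} [mU : MeasurableSpace U] (Y : Path T d × U → Path T d) : Prop :=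
  ∀ t, Measurable[(pastSigma T d t).prod mU, pastSigma T d t] Y

section Causal

variable {U : Type*} [mU : MeasurableSpace U] {ν : Measure U} {Y : Path T d × U → Path T d}

lemma pastSigma_prod_le (t : ℕ) :
    (pastSigma T d t).prod mU ≤ MeasurableSpace.pi.prod mU :=
  sup_le_sup_right (MeasurableSpace.comap_mono (pastSigma_le T d t)) _

lemma IsCausal.measurable (hY : IsCausal Y) : Measurable Y :=
  measurable_pi_lambda _ fun s =>
    (measurable_pastSigma_iff.1 (hY s) s le_rfl).mono (pastSigma_prod_le s) le_rfl

lemma IsCausal.integral_abs_condNext_map_sub_le [IsFiniteMeasure π] [IsProbabilityMeasure ν]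
    (hY : IsCausal Y) (hπ : ∀ t i, Integrable (fun x => x t i) π)
    (hπY : ∀ t i, Integrable (fun x => x t i) ((π.prod ν).map Y)) {t : ℕ} (ht : t + 1 < T)
    (i : Fin d) :
    ∫ x, |condNext ((π.prod ν).map Y) t ht i x - x ⟨t, Nat.lt_of_succ_lt ht⟩ i|
        ∂((π.prod ν).map Y) ≤
      ∫ x, |condNext π t ht i x - x ⟨t, Nat.lt_of_succ_lt ht⟩ i| ∂π +
        ∫ p, |Y p ⟨t + 1, ht⟩ i - p.1 ⟨t + 1, ht⟩ i| ∂(π.prod ν) +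
        ∫ p, |Y p ⟨t, Nat.lt_of_succ_lt ht⟩ i - p.1 ⟨t, Nat.lt_of_succ_lt ht⟩ i| ∂(π.prod ν) := by
  set s₀ : Fin T := ⟨t, Nat.lt_of_succ_lt ht⟩
  set s₁ : Fin T := ⟨t + 1, ht⟩
  have hX (s : Fin T) : Integrable (fun p : Path T d × U => p.1 s i) (π.prod ν) :=
    (hπ s i).comp_fst ν
  have hYi (s : Fin T) : Integrable (fun p => Y p s i) (π.prod ν) :=
    (hπY s i).comp_measurable hY.measurable
  have hcond : Integrable (fun x => condNext ((π.prod ν).map Y) t ht i x - x s₀ i)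
      ((π.prod ν).map Y) := integrable_condExp.sub (hπY s₀ i)
  have adapted : StronglyMeasurable[(pastSigma T d t).comap Y] fun p => Y p s₀ i :=
    Measurable.stronglyMeasurable <| (measurable_pi_apply i).comp <|
      (measurable_eval_pastSigma le_rfl).comp (comap_measurable Y)
  calc ∫ x, |condNext ((π.prod ν).map Y) t ht i x - x s₀ i| ∂((π.prod ν).map Y)
      = ∫ p, |condNext ((π.prod ν).map Y) t ht i (Y p) - Y p s₀ i| ∂(π.prod ν) :=
        integral_map hY.measurable.aemeasurable hcond.abs.aestronglyMeasurable
    _ = ∫ p, |((π.prod ν)[fun p => Y p s₁ i | (pastSigma T d t).comap Y]) p - Y p s₀ i|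
          ∂(π.prod ν) := by
        refine integral_congr_ae ?_
        filter_upwards [condExp_map_comp_ae_eq (pastSigma_le T d t) hY.measurable (hπY s₁ i)]
          with p hp
        rw [condNext, hp]
    _ ≤ ∫ p, |((π.prod ν)[fun p => p.1 s₁ i | (pastSigma T d t).prod mU]) p - p.1 s₀ i|
            ∂(π.prod ν) +
          ∫ p, |Y p s₁ i - p.1 s₁ i| ∂(π.prod ν) + ∫ p, |Y p s₀ i - p.1 s₀ i| ∂(π.prod ν) :=
        integral_abs_condExp_sub_le (hY t).comap_le (pastSigma_prod_le t) (hX s₀) (hX s₁)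
          (hYi s₀) (hYi s₁) adapted
    _ = ∫ p, |condNext π t ht i p.1 - p.1 s₀ i| ∂(π.prod ν) +
          ∫ p, |Y p s₁ i - p.1 s₁ i| ∂(π.prod ν) + ∫ p, |Y p s₀ i - p.1 s₀ i| ∂(π.prod ν) := by
        congr 2
        refine integral_congr_ae ?_
        filter_upwards [condExp_prod_comp_fst_ae_eq (Q := ν) (pastSigma_le T d t) (hπ s₁ i)]
          with p hp
        rw [condNext, hp]
    _ = ∫ x, |condNext π t ht i x - x s₀ i| ∂π +
          ∫ p, |Y p s₁ i - p.1 s₁ i| ∂(π.prod ν) + ∫ p, |Y p s₀ i - p.1 s₀ i| ∂(π.prod ν) := by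
        rw [integral_fun_fst fun x : Path T d => |condNext π t ht i x - x s₀ i|, probReal_univ,
          one_smul]

lemma IsCausal.map_mem_martSetEps [IsProbabilityMeasure ν]
    (hmom : ∀ t i, Integrable (fun y => y) (μ t i))
    (hmom' : ∀ t i, Integrable (fun y => y) (μ' t i)) {ε w : ℝ} (hπ : π ∈ MartSetEps μ ε)
    (hY : IsCausal Y) (hYμ' : HasMarginals ((π.prod ν).map Y) μ')
    (hw : ∀ t, ∑ i, ∫ p, |Y p t i - p.1 t i| ∂(π.prod ν) ≤ w) :
    (π.prod ν).map Y ∈ MartSetEps μ' (ε + 2 * w) := by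
  obtain ⟨hπprob, hπμ, defect⟩ := hπ
  have := Measure.isProbabilityMeasure_map (μ := π.prod ν) hY.measurable.aemeasurable
  have hπint (t i) : Integrable (fun x => x t i) π := hπμ.integrable_eval (hmom t i)
  have hπYint (t i) : Integrable (fun x => x t i) ((π.prod ν).map Y) :=
    hYμ'.integrable_eval (hmom' t i)
  refine ⟨this, hYμ', fun t ht => ?_⟩
  rw [integral_sum_abs_condNext_sub hπYint ht]
  refine (Finset.sum_le_sum fun i _ =>
    hY.integral_abs_condNext_map_sub_le hπint hπYint ht i).trans ?_
  rw [Finset.sum_add_distrib, Finset.sum_add_distrib, ← integral_sum_abs_condNext_sub hπint ht]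
  linarith [defect t ht, hw ⟨t + 1, ht⟩, hw ⟨t, Nat.lt_of_succ_lt ht⟩]

end Causal

open unitInterval

lemma isCausal_of_coordinates {U : Type*} [mU : MeasurableSpace U]
    {g : Fin T → Fin d → ℝ × U → ℝ} (hg : ∀ t i, Measurable (g t i)) :
    IsCausal fun (p : Path T d × U) t i => g t i (p.1 t i, p.2) := by
  intro t
  let past := (pastSigma T d t).prod mU
  refine measurable_pastSigma_iff.2 fun s hs => @measurable_pi_lambda _ _ _ past _ _ fun i => ?_
  have hfst : Measurable[past] fun p : Path T d × U => p.1 s i :=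
    (measurable_pi_apply i).comp <| (measurable_eval_pastSigma hs).comp <|
      @measurable_fst _ _ (pastSigma T d t) mU
  have hsnd : Measurable[past] fun p : Path T d × U => p.2 :=
    @measurable_snd _ _ (pastSigma T d t) mU
  exact (hg s i).comp (@Measurable.prodMk _ past _ _ _ _ _ _ hfst hsnd)

lemma HasMarginals.exists_isCausal_integral_eq_W1R [IsProbabilityMeasure π]
    (hπ : HasMarginals π μ) (hprob' : ∀ t i, IsProbabilityMeasure (μ' t i))
    (hmom : ∀ t i, Integrable (fun y => y) (μ t i))
    (hmom' : ∀ t i, Integrable (fun y => y) (μ' t i)) :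
    ∃ Y : Path T d × I → Path T d, IsCausal Y ∧ HasMarginals ((π.prod volume).map Y) μ' ∧
      ∀ t i, ∫ p, |Y p t i - p.1 t i| ∂(π.prod volume) = W1R (μ' t i) (μ t i) := by
  have hprob (t i) : IsProbabilityMeasure (μ t i) :=
    hπ t i ▸ Measure.isProbabilityMeasure_map (Measurable.aemeasurable (by fun_prop))
  choose g hg map_g integral_g using fun t i =>
    exists_measurable_map_eq_integral_eq_W1R (μ t i) (μ' t i) (hmom t i) (hmom' t i)
  have coord (t : Fin T) (i : Fin d) : MeasurePreserving
      (fun p : Path T d × I => (p.1 t i, p.2)) (π.prod volume) ((μ t i).prod volume) :=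
    MeasurePreserving.prod ⟨by fun_prop, hπ t i⟩ (MeasurePreserving.id volume)
  have hY := isCausal_of_coordinates hg
  refine ⟨_, hY, fun t i => ?_, fun t i => ?_⟩
  · rw [Measure.map_map (by fun_prop) hY.measurable, ← map_g t i, ← (coord t i).map_eq,
      Measure.map_map (hg t i) (coord t i).measurable]
    rfl
  · rw [← integral_g t i, ← (coord t i).map_eq,
      integral_map (coord t i).aemeasurable (by fun_prop)]

end PathSpace

section Cost

variable {T d : ℕ} {c : Path T d → ℝ} {L : ℝ}

namespace LipschitzCost

lemma continuous (hc : LipschitzCost L c) : Continuous c := by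
  refine continuous_iff_continuousAt.2 fun x => tendsto_iff_dist_tendsto_zero.2 ?_
  have hcont : Continuous fun y : Path T d => L * ∑ t, ∑ i, |y t i - x t i| := by fun_prop
  exact squeeze_zero (fun _ => dist_nonneg) (fun y => hc y x) (by simpa using hcont.tendsto x)

variable {Ω : Type*} [MeasurableSpace Ω] {P : Measure Ω} [IsFiniteMeasure P]
  {X Y : Ω → Path T d}

lemma integrable_comp (hc : LipschitzCost L c) (hX : ∀ t i, Integrable (fun ω => X ω t i) P) :
    Integrable (fun ω => c (X ω)) P := by
  have hXm : AEMeasurable X P :=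
    aemeasurable_pi_lambda _ fun t => aemeasurable_pi_lambda _ fun i => (hX t i).aemeasurable
  have hbound : Integrable (fun ω => L * ∑ t, ∑ i, |X ω t i| + |c 0|) P :=
    ((integrable_finsetSum _ fun t _ => integrable_finsetSum _ fun i _ =>
      (hX t i).abs).const_mul L).add (integrable_const _)
  refine hbound.mono' (hc.continuous.measurable.comp_aemeasurable hXm).aestronglyMeasurable
    (ae_of_all _ fun ω => ?_)
  calc |c (X ω)| ≤ |c (X ω) - c 0| + |c 0| := by
        simpa using abs_add_le (c (X ω) - c 0) (c 0)
    _ ≤ L * ∑ t, ∑ i, |X ω t i| + |c 0| := by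
        gcongr
        simpa using hc (X ω) 0

lemma abs_integral_comp_sub_le (hc : LipschitzCost L c)
    (hX : ∀ t i, Integrable (fun ω => X ω t i) P) (hY : ∀ t i, Integrable (fun ω => Y ω t i) P) :
    |∫ ω, c (Y ω) ∂P - ∫ ω, c (X ω) ∂P| ≤ L * ∑ t, ∑ i, ∫ ω, |Y ω t i - X ω t i| ∂P := by
  have hXY (t : Fin T) (i : Fin d) : Integrable (fun ω => |Y ω t i - X ω t i|) P :=
    ((hY t i).sub (hX t i)).abs
  have hXYt (t : Fin T) : Integrable (fun ω => ∑ i, |Y ω t i - X ω t i|) P :=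
    integrable_finsetSum _ fun i _ => hXY t i
  calc |∫ ω, c (Y ω) ∂P - ∫ ω, c (X ω) ∂P| = |∫ ω, (c (Y ω) - c (X ω)) ∂P| := by
        rw [integral_sub (hc.integrable_comp hY) (hc.integrable_comp hX)]
    _ ≤ ∫ ω, |c (Y ω) - c (X ω)| ∂P := abs_integral_le_integral_abs
    _ ≤ ∫ ω, L * ∑ t, ∑ i, |Y ω t i - X ω t i| ∂P :=
        integral_mono ((hc.integrable_comp hY).sub (hc.integrable_comp hX)).abs
          ((integrable_finsetSum _ fun t _ => hXYt t).const_mul L) fun ω => hc (Y ω) (X ω)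
    _ = L * ∑ t, ∑ i, ∫ ω, |Y ω t i - X ω t i| ∂P := by
        rw [integral_const_mul, integral_finsetSum _ fun t _ => hXYt t]
        simp only [integral_finsetSum _ fun i _ => hXY _ i]

end LipschitzCost

variable {μ μ' : Fin T → Fin d → Measure ℝ} {ε : ℝ}

lemma primalVals_nonempty (hc : LipschitzCost L c)
    (hmom : ∀ t i, Integrable (fun y => y) (μ t i)) (hne : (MartSetEps μ ε).Nonempty) :
    (primalVals c (MartSetEps μ ε)).Nonempty := by
  obtain ⟨π, hπ⟩ := hne
  have := hπ.1
  exact ⟨_, π, hπ, hc.integrable_comp fun t i => hπ.2.1.integrable_eval (hmom t i), rfl⟩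

lemma isBounded_primalVals (hc : LipschitzCost L c)
    (hmom : ∀ t i, Integrable (fun y => y) (μ t i)) :
    Bornology.IsBounded (primalVals c (MartSetEps μ ε)) := by
  refine (Metric.isBounded_iff_subset_closedBall (c 0)).2
    ⟨L * ∑ t, ∑ i, ∫ y, |y| ∂(μ t i), ?_⟩
  rintro _ ⟨π, ⟨hπprob, hπμ, -⟩, -, rfl⟩
  have hbound := hc.abs_integral_comp_sub_le (P := π) (X := fun _ => 0) (Y := id)
    (fun _ _ => integrable_const 0) (fun t i => hπμ.integrable_eval (hmom t i))
  have hmarg (t : Fin T) (i : Fin d) : ∫ x, |x t i| ∂π = ∫ y, |y| ∂(μ t i) := by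
    rw [← hπμ t i, integral_map (Measurable.aemeasurable (by fun_prop)) (by fun_prop)]
  simpa [Real.dist_eq, hmarg] using hbound

lemma exists_mem_martSetEps_abs_integral_sub_le (hprob' : ∀ t i, IsProbabilityMeasure (μ' t i))
    (hmom : ∀ t i, Integrable (fun y => y) (μ t i))
    (hmom' : ∀ t i, Integrable (fun y => y) (μ' t i)) {w : ℝ}
    (hw : ∀ t, ∑ i, W1R (μ' t i) (μ t i) ≤ w) {π : Measure (Path T d)}
    (hπ : π ∈ MartSetEps μ ε) :
    ∃ π' ∈ MartSetEps μ' (ε + 2 * w), ∀ (c : Path T d → ℝ) (L : ℝ), LipschitzCost L c →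
      |∫ x, c x ∂π' - ∫ x, c x ∂π| ≤ L * ∑ t, ∑ i, W1R (μ' t i) (μ t i) := by
  have := hπ.1
  obtain ⟨Y, hY, hYμ', displacement⟩ :=
    hπ.2.1.exists_isCausal_integral_eq_W1R hprob' hmom hmom'
  refine ⟨_, hY.map_mem_martSetEps hmom hmom' hπ hYμ' (by simpa only [displacement] using hw),
    fun c L hc => ?_⟩
  have hX (t : Fin T) (i : Fin d) :
      Integrable (fun p : Path T d × unitInterval => p.1 t i) (π.prod volume) :=
    (hπ.2.1.integrable_eval (hmom t i)).comp_fst _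
  have hYint (t : Fin T) (i : Fin d) : Integrable (fun p => Y p t i) (π.prod volume) :=
    (hYμ'.integrable_eval (hmom' t i)).comp_measurable hY.measurable
  simpa only [displacement, integral_fun_fst, probReal_univ, one_smul,
    integral_map hY.measurable.aemeasurable hc.continuous.measurable.aestronglyMeasurable]
    using hc.abs_integral_comp_sub_le hX hYint

lemma exists_mem_primalVals_abs_sub_le (hc : LipschitzCost L c)
    (hprob' : ∀ t i, IsProbabilityMeasure (μ' t i))
    (hmom : ∀ t i, Integrable (fun y => y) (μ t i))
    (hmom' : ∀ t i, Integrable (fun y => y) (μ' t i)) {w : ℝ}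
    (hw : ∀ t, ∑ i, W1R (μ' t i) (μ t i) ≤ w) {v : ℝ} (hv : v ∈ primalVals c (MartSetEps μ ε)) :
    ∃ v' ∈ primalVals c (MartSetEps μ' (ε + 2 * w)),
      |v' - v| ≤ L * ∑ t, ∑ i, W1R (μ' t i) (μ t i) := by
  obtain ⟨π, hπ, -, rfl⟩ := hv
  obtain ⟨π', hπ', close⟩ :=
    exists_mem_martSetEps_abs_integral_sub_le hprob' hmom hmom' hw hπ
  have := hπ'.1
  exact ⟨_, ⟨π', hπ', hc.integrable_comp fun t i => hπ'.2.1.integrable_eval (hmom' t i), rfl⟩,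
    close c L hc⟩

end Cost

section Order

lemma csSup_le_csSup_add {A B : Set ℝ} {δ : ℝ} (hA : A.Nonempty) (hB : BddAbove B)
    (hAB : ∀ a ∈ A, ∃ b ∈ B, |b - a| ≤ δ) : sSup A ≤ sSup B + δ := by
  refine csSup_le hA fun a ha => ?_
  obtain ⟨b, hb, hba⟩ := hAB a ha
  linarith [le_csSup hB hb, (abs_le.1 hba).1]

lemma csInf_sub_le_csInf {A B : Set ℝ} {δ : ℝ} (hA : A.Nonempty) (hB : BddBelow B)
    (hAB : ∀ a ∈ A, ∃ b ∈ B, |b - a| ≤ δ) : sInf B - δ ≤ sInf A := by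
  refine le_csInf hA fun a ha => ?_
  obtain ⟨b, hb, hba⟩ := hAB a ha
  linarith [csInf_le hB hb, (abs_le.1 hba).2]

lemma mul_sum_le_mul_card_mul_sup' {ι : Type*} {s : Finset ι} (hs : s.Nonempty) {a : ι → ℝ}
    (ha : ∀ i ∈ s, 0 ≤ a i) {L : ℝ} (hL : 0 ≤ L * ∑ i ∈ s, a i) :
    L * ∑ i ∈ s, a i ≤ L * s.card * s.sup' hs a := by
  rcases le_or_gt 0 L with hL₀ | hL₀
  · rw [mul_assoc, ← nsmul_eq_mul]
    exact mul_le_mul_of_nonneg_left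
      (Finset.sum_le_card_nsmul s a _ fun i hi => Finset.le_sup' a hi) hL₀
  · have sum_eq_zero : ∑ i ∈ s, a i = 0 :=
      le_antisymm (nonpos_of_mul_nonneg_right hL hL₀) (Finset.sum_nonneg ha)
    have sup_eq_zero : s.sup' hs a = 0 := by
      rw [Finset.sup'_congr hs rfl ((Finset.sum_eq_zero_iff_of_nonneg ha).1 sum_eq_zero),
        Finset.sup'_const]
    rw [sum_eq_zero, sup_eq_zero, mul_zero, mul_zero]

end Order

/-- Proposition: stability of the relaxed problems.
If `ℳ_ε(μ̌) ≠ ∅` and `r = 2 max_t Σ_i 𝒲₁(μ'_{t,i}, μ_{t,i})`, then `ℳ_{ε+r}(μ̌') ≠ ∅`, and for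
every `L`-Lipschitz cost `c` one has `P̄_ε(μ̌) ≤ P̄_{ε+r}(μ̌') + LTr/2` and
`P̲_ε(μ̌) ≥ P̲_{ε+r}(μ̌') − LTr/2`. -/
theorem mmot_approx {T d : ℕ} (hT : 0 < T) (μ μ' : Fin T → Fin d → Measure ℝ)
    (hprob : ∀ t i, IsProbabilityMeasure (μ t i))
    (hprob' : ∀ t i, IsProbabilityMeasure (μ' t i))
    (hmom : ∀ t i, Integrable (fun y : ℝ => y) (μ t i))
    (hmom' : ∀ t i, Integrable (fun y : ℝ => y) (μ' t i))
    (ε : ℝ) (hε : 0 ≤ ε) (hne : (MartSetEps μ ε).Nonempty)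
    (r : ℝ)
    (hr : r = 2 * Finset.univ.sup' ⟨⟨0, hT⟩, Finset.mem_univ _⟩
      (fun t => ∑ i, W1R (μ' t i) (μ t i))) :
    (MartSetEps μ' (ε + r)).Nonempty ∧
    ∀ (c : Path T d → ℝ) (L : ℝ), LipschitzCost L c →
      PbarEps μ c ε ≤ PbarEps μ' c (ε + r) + L * T * r / 2 ∧
      PlowEps μ' c (ε + r) - L * T * r / 2 ≤ PlowEps μ c ε := by
  subst hr
  set w := Finset.univ.sup' ⟨⟨0, hT⟩, Finset.mem_univ _⟩ fun t => ∑ i, W1R (μ' t i) (μ t i)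
  have hw (t : Fin T) : ∑ i, W1R (μ' t i) (μ t i) ≤ w :=
    Finset.le_sup' (fun t => ∑ i, W1R (μ' t i) (μ t i)) (Finset.mem_univ t)
  obtain ⟨π, hπ⟩ := hne
  obtain ⟨π', hπ', π'_close⟩ := exists_mem_martSetEps_abs_integral_sub_le hprob' hmom hmom' hw hπ
  refine ⟨⟨π', hπ'⟩, fun c L hc => ?_⟩
  have total_le : L * ∑ t, ∑ i, W1R (μ' t i) (μ t i) ≤ L * T * (2 * w) / 2 := by
    have := mul_sum_le_mul_card_mul_sup' ⟨⟨0, hT⟩, Finset.mem_univ _⟩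
      (fun t _ => Finset.sum_nonneg fun i _ => W1R_nonneg (μ' t i) (μ t i))
      ((abs_nonneg _).trans (π'_close c L hc))
    rw [Finset.card_univ, Fintype.card_fin] at this
    linarith
  have nonempty := primalVals_nonempty hc hmom ⟨π, hπ⟩
  have bounded := isBounded_primalVals (ε := ε + 2 * w) hc hmom'
  have close : ∀ v ∈ primalVals c (MartSetEps μ ε),
      ∃ v' ∈ primalVals c (MartSetEps μ' (ε + 2 * w)), |v' - v| ≤ L * T * (2 * w) / 2 := by
    intro v hv
    obtain ⟨v', hv', hle⟩ := exists_mem_primalVals_abs_sub_le hc hprob' hmom hmom' hw hv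
    exact ⟨v', hv', hle.trans total_le⟩
  exact ⟨csSup_le_csSup_add nonempty bounded.bddAbove close,
    csInf_sub_le_csInf nonempty bounded.bddBelow close⟩

end MMOT
end

section
/- Assume the cost c : 𝒳 → ℝ has linear growth and ℳ(μ̌) ≠ ∅. If c is upper semi-continuous, then the map ℝ₊ ∋ ε ↦ P̄_ε(μ̌) ∈ ℝ is non-decreasing, continuous and concave. -/
open MeasureTheory Filter

namespace MMOT

def IsMartingaleMeasure {T d : ℕ} (π : Measure (Path T d)) : Prop :=
  ∀ (t : ℕ) (ht : t + 1 < T) (i : Fin d),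
    condNext π t ht i =ᵐ[π] fun x => x ⟨t, Nat.lt_of_succ_lt ht⟩ i

/-- The set `ℳ(μ̌)` of calibrated martingale measures. -/
def MartSet {T d : ℕ} (μ : Fin T → Fin d → Measure ℝ) : Set (Measure (Path T d)) :=
  {π | IsProbabilityMeasure π ∧ HasMarginals π μ ∧ IsMartingaleMeasure π}

/-
The `L¹`-norm of a conditional expectation `E_π[Y | p]` is the supremum of `∫ φ(p) Y dπ` over
continuous `φ` bounded by `1`. Each of these integrals is affine in `π` and, on the measures with
prescribed marginals, weakly continuous, so the martingale defect is convex and weakly lower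
semicontinuous. Hence `ℳ_ε(μ̌)` is a closed subset of the weakly compact set `Π(μ̌)`, on which
`π ↦ ∫ c dπ` is upper semicontinuous, and the supremum `P̄_ε` is attained. Mixing optimizers for
two values of `ε` gives concavity, which yields continuity on `(0, ∞)`. At `0`, near-optimizers
for `ε ↓ 0` lie in a decreasing sequence of nonempty compact sets, and a common point of these
sets bounds `P̄_0` from below.
-/

open TopologicalSpace
open scoped Topology NNReal BoundedContinuousFunction

section CondExpL1

/-- The norm `‖E_ρ[Y | p]‖` in `L¹(ρ)` of the conditional expectation of `Y` given the
random variable `p`, viewed as a functional of the underlying measure `ρ`. -/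
noncomputable def condExpL1Norm {Ω E : Type*} [MeasurableSpace Ω] [mE : MeasurableSpace E]
    (ρ : Measure Ω) (p : Ω → E) (Y : Ω → ℝ) : ℝ :=
  ∫ x, |(ρ[Y | mE.comap p]) x| ∂ρ

lemma integral_mul_condExp {Ω : Type*} {m m₀ : MeasurableSpace Ω} {ρ : Measure Ω} (hm : m ≤ m₀)
    [SigmaFinite (ρ.trim hm)] {h Y : Ω → ℝ} (hh : StronglyMeasurable[m] h)
    (hhY : Integrable (h * Y) ρ) (hY : Integrable Y ρ) :
    ∫ x, h x * (ρ[Y | m]) x ∂ρ = ∫ x, h x * Y x ∂ρ :=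
  (integral_congr_ae (condExp_mul_of_stronglyMeasurable_left hh hhY hY).symm).trans
    (integral_condExp hm)

variable {Ω E : Type*} [MeasurableSpace Ω] [TopologicalSpace E] [MeasurableSpace E]

lemma integrable_boundedContinuous_comp_mul [OpensMeasurableSpace E] {ρ : Measure Ω} {p : Ω → E}
    (hp : Measurable p) {Y : Ω → ℝ} (hY : Integrable Y ρ) (φ : E →ᵇ ℝ) :
    Integrable (fun x => φ (p x) * Y x) ρ :=
  hY.bdd_mul (φ.continuous.measurable.comp hp).aestronglyMeasurable
    (ae_of_all _ fun x => φ.norm_coe_le_norm (p x))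

variable [BorelSpace E] [PseudoMetrizableSpace E]

lemma exists_boundedContinuous_integral_mul_abs_sub_sign_le {ν : Measure E} {g : E → ℝ}
    (hg : Integrable g ν) {δ : ℝ} (hδ : 0 < δ) :
    ∃ φ : E →ᵇ ℝ, Integrable (fun x => |g x| * |g x / |g x| - φ x|) ν ∧
      ∫ x, |g x| * |g x / |g x| - φ x| ∂ν ≤ δ := by
  set ρ := ν.withDensity fun x => ‖g x‖ₑ
  have : IsFiniteMeasure ρ := isFiniteMeasure_withDensity hg.2.ne
  have hsign : Integrable (fun x => g x / |g x|) ρ := by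
    refine .of_bound (C := 1) ?_ (ae_of_all _ fun x => ?_)
    · have : AEMeasurable g ν := hg.aemeasurable
      exact AEStronglyMeasurable.mono_ac (withDensity_absolutelyContinuous _ _)
        (by fun_prop : AEMeasurable (fun x => g x / |g x|) ν).aestronglyMeasurable
    · rw [norm_div, Real.norm_eq_abs, Real.norm_eq_abs, abs_abs]
      exact div_self_le_one _
  obtain ⟨φ, hφ, hφρ⟩ := hsign.exists_boundedContinuous_integral_sub_le hδ
  refine ⟨φ, ?_, ?_⟩
  · have := (integrable_withDensity_iff_integrable_smul₀' hg.aemeasurable.enorm (by simp)).1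
      (hsign.sub hφρ).abs
    simpa using this
  · rw [integral_withDensity_eq_integral_toReal_smul₀ hg.aemeasurable.enorm (by simp)] at hφ
    simpa using hφ

lemma isLUB_integral_boundedContinuous_mul {ν : Measure E} {g : E → ℝ} (hg : Integrable g ν) :
    IsLUB ((fun φ : E →ᵇ ℝ => ∫ x, φ x * g x ∂ν) '' Metric.closedBall 0 1) (∫ x, |g x| ∂ν) := by
  have hint (φ : E →ᵇ ℝ) : Integrable (fun x => φ x * g x) ν :=
    integrable_boundedContinuous_comp_mul measurable_id hg φ
  constructor
  · rintro _ ⟨φ, hφ, rfl⟩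
    refine integral_mono (hint φ) hg.abs fun x => (le_abs_self _).trans ?_
    rw [abs_mul]
    exact mul_le_of_le_one_left (abs_nonneg _)
      ((φ.norm_coe_le_norm x).trans (mem_closedBall_zero_iff.1 hφ))
  · refine fun b hb => le_of_forall_pos_le_add fun δ hδ => ?_
    obtain ⟨φ, hφ_int, hφ⟩ := exists_boundedContinuous_integral_mul_abs_sub_sign_le hg hδ
    set ψ : E →ᵇ ℝ := (φ ⊓ 1) ⊔ (-1)
    have hψ : ψ ∈ Metric.closedBall 0 1 := by
      rw [mem_closedBall_zero_iff, BoundedContinuousFunction.norm_le zero_le_one]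
      intro x
      rw [Real.norm_eq_abs, abs_le]
      exact ⟨le_sup_right, sup_le inf_le_right (by norm_num)⟩
    -- Clamping `φ` to `[-1, 1]` brings it closer to the sign `g / |g|`.
    have hclamp (x : E) : |g x| ≤ ψ x * g x + |g x| * |g x / |g x| - φ x| := by
      have hψx : ψ x = max (min (φ x) 1) (-1) := rfl
      rcases lt_trichotomy (g x) 0 with h | h | h
      · rw [abs_of_neg h, div_neg, div_self h.ne, hψx]
        have : max (min (φ x) 1) (-1) + 1 ≤ |-1 - φ x| := by
          grind
        nlinarith
      · simp [h]
      · rw [abs_of_pos h, div_self h.ne', hψx]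
        have : 1 - max (min (φ x) 1) (-1) ≤ |1 - φ x| := by
          grind
        nlinarith
    calc ∫ x, |g x| ∂ν
        ≤ ∫ x, (ψ x * g x + |g x| * |g x / |g x| - φ x|) ∂ν :=
          integral_mono hg.abs ((hint ψ).add hφ_int) hclamp
      _ = ∫ x, ψ x * g x ∂ν + ∫ x, |g x| * |g x / |g x| - φ x| ∂ν :=
          integral_add (hint ψ) hφ_int
      _ ≤ b + δ := add_le_add (hb ⟨ψ, hψ, rfl⟩) hφ

lemma isLUB_condExpL1Norm {ρ : Measure Ω} [IsFiniteMeasure ρ] {p : Ω → E} (hp : Measurable p)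
    {Y : Ω → ℝ} (hY : Integrable Y ρ) :
    IsLUB ((fun φ : E →ᵇ ℝ => ∫ x, φ (p x) * Y x ∂ρ) '' Metric.closedBall 0 1)
      (condExpL1Norm ρ p Y) := by
  obtain ⟨g, hg, hgp⟩ := StronglyMeasurable.exists_eq_measurable_comp
    (stronglyMeasurable_condExp (f := Y) (μ := ρ) (m := MeasurableSpace.comap p inferInstance))
  have hg_int : Integrable g (ρ.map p) := by
    rw [integrable_map_measure hg.aestronglyMeasurable hp.aemeasurable, ← hgp]
    exact integrable_condExp
  have hnorm : condExpL1Norm ρ p Y = ∫ y, |g y| ∂(ρ.map p) := by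
    rw [condExpL1Norm, hgp, integral_map hp.aemeasurable hg_int.abs.aestronglyMeasurable]
    rfl
  have htest (φ : E →ᵇ ℝ) : ∫ x, φ (p x) * Y x ∂ρ = ∫ y, φ y * g y ∂(ρ.map p) := by
    have hφp : Measurable[MeasurableSpace.comap p inferInstance] (φ ∘ p) :=
      φ.continuous.measurable.comp (comap_measurable p)
    refine (integral_mul_condExp hp.comap_le hφp.stronglyMeasurable
      (integrable_boundedContinuous_comp_mul hp hY φ) hY).symm.trans ?_
    rw [hgp, integral_map hp.aemeasurable]
    · rfl
    · exact φ.continuous.measurable.aestronglyMeasurable.mul hg.aestronglyMeasurable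
  simpa only [hnorm, htest] using isLUB_integral_boundedContinuous_mul hg_int

lemma condExpL1Norm_add_le {ρ₁ ρ₂ : Measure Ω} [IsFiniteMeasure ρ₁] [IsFiniteMeasure ρ₂]
    {p : Ω → E} (hp : Measurable p) {Y : Ω → ℝ} (hY₁ : Integrable Y ρ₁) (hY₂ : Integrable Y ρ₂)
    (a b : ℝ≥0) :
    condExpL1Norm (a • ρ₁ + b • ρ₂) p Y ≤ a * condExpL1Norm ρ₁ p Y + b * condExpL1Norm ρ₂ p Y := by
  refine (isLUB_condExpL1Norm hp (hY₁.smul_measure_nnreal.add_measure hY₂.smul_measure_nnreal)).2 ?_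
  rintro _ ⟨φ, hφ, rfl⟩
  have h₁ := integrable_boundedContinuous_comp_mul hp hY₁ φ
  have h₂ := integrable_boundedContinuous_comp_mul hp hY₂ φ
  simp only [integral_add_measure h₁.smul_measure_nnreal h₂.smul_measure_nnreal,
    integral_smul_nnreal_measure, NNReal.smul_def, smul_eq_mul]
  gcongr
  · exact (isLUB_condExpL1Norm hp hY₁).1 ⟨φ, hφ, rfl⟩
  · exact (isLUB_condExpL1Norm hp hY₂).1 ⟨φ, hφ, rfl⟩

lemma lowerSemicontinuousOn_condExpL1Norm {X : Type*} [TopologicalSpace X] {ρ : X → Measure Ω}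
    [∀ x, IsFiniteMeasure (ρ x)] {S : Set X} {p : Ω → E} (hp : Measurable p) {Y : Ω → ℝ}
    (hY : ∀ x ∈ S, Integrable Y (ρ x))
    (hcont : ∀ φ : E →ᵇ ℝ, ContinuousOn (fun x => ∫ ω, φ (p ω) * Y ω ∂(ρ x)) S) :
    LowerSemicontinuousOn (fun x => condExpL1Norm (ρ x) p Y) S := by
  intro x hx r hr
  obtain ⟨_, ⟨φ, hφ, rfl⟩, hrφ⟩ := (lt_isLUB_iff (isLUB_condExpL1Norm hp (hY x hx))).1 hr
  filter_upwards [(hcont φ x hx).eventually_const_lt hrφ, self_mem_nhdsWithin] with x' hx' hx'S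
  exact hx'.trans_le ((isLUB_condExpL1Norm hp (hY x' hx'S)).1 ⟨φ, hφ, rfl⟩)

end CondExpL1

section WeakConvergence

variable {Ω : Type*} [MeasurableSpace Ω] [TopologicalSpace Ω]

lemma isTightMeasureSet_of_integral_le {S : Set (Measure Ω)} {W : Ω → ℝ} (hW₀ : ∀ x, 0 ≤ W x)
    (hW : ∀ r, IsCompact {x | W x ≤ r}) (hWint : ∀ ρ ∈ S, Integrable W ρ) {C : ℝ}
    (hC : ∀ ρ ∈ S, ∫ x, W x ∂ρ ≤ C) : IsTightMeasureSet S := by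
  rw [isTightMeasureSet_iff_exists_isCompact_measure_compl_le]
  intro ε hε
  have hlim : Tendsto (fun r : ℝ => ENNReal.ofReal (C / r)) atTop (𝓝 0) := by
    simpa using ENNReal.tendsto_ofReal (tendsto_const_nhds.div_atTop tendsto_id)
  obtain ⟨r, hrε, hr⟩ := ((hlim.eventually_le_const hε).and (eventually_gt_atTop 0)).exists
  refine ⟨{x | W x ≤ r}, hW r, fun ρ hρ => ?_⟩
  have hmarkov : r * ρ.real {x | r ≤ W x} ≤ C :=
    (mul_meas_ge_le_integral_of_nonneg (ae_of_all _ hW₀) (hWint ρ hρ) r).trans (hC ρ hρ)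
  have hfin : ρ {x | r ≤ W x} ≠ ⊤ := ((hWint ρ hρ).measure_ge_lt_top hr).ne
  calc ρ {x | W x ≤ r}ᶜ ≤ ρ {x | r ≤ W x} :=
        measure_mono fun x (hx : ¬ W x ≤ r) => (not_le.1 hx).le
    _ = ENNReal.ofReal (ρ.real {x | r ≤ W x}) := (ofReal_measureReal hfin).symm
    _ ≤ ENNReal.ofReal (C / r) := ENNReal.ofReal_le_ofReal ((le_div_iff₀' hr).2 hmarkov)
    _ ≤ ε := hrε

variable [OpensMeasurableSpace Ω] [HasOuterApproxClosed Ω]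
  [FirstCountableTopology (ProbabilityMeasure Ω)]

lemma lowerSemicontinuous_lintegral_ofReal {f : Ω → ℝ} (hf : LowerSemicontinuous f)
    (hf₀ : 0 ≤ f) :
    LowerSemicontinuous fun π : ProbabilityMeasure Ω => ∫⁻ x, ENNReal.ofReal (f x) ∂π := by
  refine lowerSemicontinuous_iff_le_liminf.2 fun π => ?_
  simp_rw [lintegral_eq_lintegral_meas_lt _ (Eventually.of_forall hf₀) hf.measurable.aemeasurable]
  calc ∫⁻ t in Set.Ioi 0, (π : Measure Ω) {x | t < f x}
      ≤ ∫⁻ t in Set.Ioi 0, liminf (fun π' : ProbabilityMeasure Ω => (π' : Measure Ω) {x | t < f x})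
          (𝓝 π) :=
        lintegral_mono fun t =>
          ProbabilityMeasure.le_liminf_measure_open_of_tendsto tendsto_id (hf.isOpen_preimage t)
    _ ≤ liminf (fun π' : ProbabilityMeasure Ω => ∫⁻ t in Set.Ioi 0,
          (π' : Measure Ω) {x | t < f x}) (𝓝 π) :=
        lintegral_liminf_le fun π' => Antitone.measurable fun s t hst =>
          measure_mono fun x hx => lt_of_le_of_lt hst hx

variable {S : Set (ProbabilityMeasure Ω)} {f W : Ω → ℝ} {C : ℝ}

lemma upperSemicontinuousOn_integral_of_le (hW : Continuous W)
    (hWint : ∀ π ∈ S, Integrable W π) (hC : ∀ π ∈ S, ∫ x, W x ∂π = C)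
    (hf : UpperSemicontinuous f) (hfint : ∀ π ∈ S, Integrable f π) (hfW : ∀ x, f x ≤ W x) :
    UpperSemicontinuousOn (fun π : ProbabilityMeasure Ω => ∫ x, f x ∂π) S := by
  have hgap : LowerSemicontinuous fun x => W x - f x := by
    simp only [sub_eq_add_neg]
    exact hW.lowerSemicontinuous.add
      (continuous_neg.comp_upperSemicontinuous_antitone hf fun _ _ => neg_le_neg)
  have hgap₀ : 0 ≤ fun x => W x - f x := fun x => sub_nonneg.2 (hfW x)
  have hlintegral : ∀ π ∈ S,
      ∫⁻ x, ENNReal.ofReal (W x - f x) ∂π = ENNReal.ofReal (C - ∫ x, f x ∂π) := fun π hπ => by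
    have hint : Integrable (fun x => W x - f x) π := (hWint π hπ).sub (hfint π hπ)
    rw [← ofReal_integral_eq_lintegral_ofReal hint (ae_of_all _ hgap₀),
      integral_sub (hWint π hπ) (hfint π hπ), hC π hπ]
  have hle : ∀ π ∈ S, ∫ x, f x ∂π ≤ C := fun π hπ =>
    hC π hπ ▸ integral_mono (hfint π hπ) (hWint π hπ) hfW
  refine upperSemicontinuousOn_iff_frequently.2 fun π hπ r hr => ?_
  have hrS := hr.and_eventually self_mem_nhdsWithin
  have hrC : r ≤ C := by
    obtain ⟨π', hr', hπ'⟩ := hrS.exists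
    exact hr'.trans (hle π' hπ')
  have hfreq : ∃ᶠ π' : ProbabilityMeasure Ω in 𝓝[S] π,
      ∫⁻ x, ENNReal.ofReal (W x - f x) ∂π' ≤ ENNReal.ofReal (C - r) := by
    refine hrS.mono fun π' ⟨hr', hπ'⟩ => ?_
    rw [hlintegral π' hπ']
    exact ENNReal.ofReal_le_ofReal (sub_le_sub_left hr' C)
  have hlim := ((lowerSemicontinuous_lintegral_ofReal hgap hgap₀).lowerSemicontinuousOn
    S).frequently π hπ _ hfreq
  rw [hlintegral π hπ, ENNReal.ofReal_le_ofReal_iff (by linarith)] at hlim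
  linarith

end WeakConvergence

lemma continuousOn_Ici_of_concaveOn_of_monotoneOn {f : ℝ → ℝ} {a : ℝ}
    (hconc : ConcaveOn ℝ (Set.Ici a) f) (hmono : MonotoneOn f (Set.Ici a))
    (hright : ∀ r, f a < r → ∃ b > a, f b < r) : ContinuousOn f (Set.Ici a) := by
  intro x hx
  rcases eq_or_lt_of_le (Set.mem_Ici.1 hx) with rfl | hax
  · refine tendsto_order.2 ⟨fun r hr => ?_, fun r hr => ?_⟩
    · filter_upwards [self_mem_nhdsWithin] with y hy
      exact hr.trans_le (hmono hx hy hy)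
    · obtain ⟨b, hab, hb⟩ := hright r hr
      filter_upwards [self_mem_nhdsWithin, mem_nhdsWithin_of_mem_nhds (Iio_mem_nhds hab)]
        with y hy hyb
      exact (hmono hy hab.le hyb.le).trans_lt hb
  · have hint := hconc.continuousOn_interior
    rw [interior_Ici] at hint
    exact (hint.continuousAt (Ioi_mem_nhds hax)).continuousWithinAt

section MartingaleDefect

variable {T d : ℕ} {μ : Fin T → Fin d → Measure ℝ} {π : Measure (Path T d)}

lemma continuous_coord (t : Fin T) (i : Fin d) : Continuous fun x : Path T d => x t i := by
  fun_prop

/-- The history `(X_0, …, X_t)` of a path, as a random variable generating `pastSigma T d t`. -/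
def past (T d t : ℕ) (x : Path T d) : {s : Fin T // (s : ℕ) ≤ t} → Fin d → ℝ := fun s => x s

lemma continuous_past (t : ℕ) : Continuous (past T d t) := by
  unfold past
  fun_prop

lemma pastSigma_eq_comap_past (t : ℕ) :
    pastSigma T d t = MeasurableSpace.pi.comap (past T d t) := by
  rw [pastSigma, iSup_subtype']
  calc ⨆ s : {s : Fin T // (s : ℕ) ≤ t}, MeasurableSpace.comap (fun x => x s) inferInstance
      = ⨆ s : {s : Fin T // (s : ℕ) ≤ t},
          (MeasurableSpace.comap (fun h => h s) inferInstance).comap (past T d t) := by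
        simp only [MeasurableSpace.comap_comp]
        rfl
    _ = MeasurableSpace.pi.comap (past T d t) := MeasurableSpace.comap_iSup.symm

/-- The increment `X_{t+1,i} - X_{t,i}` of the `i`-th asset. -/
def increment (t : ℕ) (ht : t + 1 < T) (i : Fin d) (x : Path T d) : ℝ :=
  x ⟨t + 1, ht⟩ i - x ⟨t, Nat.lt_of_succ_lt ht⟩ i

lemma continuous_increment (t : ℕ) (ht : t + 1 < T) (i : Fin d) :
    Continuous (increment t ht i) := by
  unfold increment
  fun_prop

/-- The martingale defect `E_π |E_π[X_{t+1} | X_0, …, X_t] - X_t|`, in the `ℓ¹`-norm of `ℝ^d`: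
the quantity that `MartSetEps μ ε` bounds by `ε` at each time `t`. -/
noncomputable def martingaleDefect (π : Measure (Path T d)) (t : ℕ) (ht : t + 1 < T) : ℝ :=
  ∫ x, ∑ i, |condNext π t ht i x - x ⟨t, Nat.lt_of_succ_lt ht⟩ i| ∂π

lemma integrable_increment (hπ : ∀ t i, Integrable (fun x => x t i) π) (t : ℕ) (ht : t + 1 < T)
    (i : Fin d) : Integrable (increment t ht i) π :=
  (hπ _ i).sub (hπ _ i)

lemma condNext_sub_ae_eq_condExp_increment [IsFiniteMeasure π]
    (hπ : ∀ t i, Integrable (fun x => x t i) π) (t : ℕ) (ht : t + 1 < T) (i : Fin d) :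
    (fun x => condNext π t ht i x - x ⟨t, Nat.lt_of_succ_lt ht⟩ i) =ᵐ[π]
      π[increment t ht i | MeasurableSpace.pi.comap (past T d t)] := by
  have hpresent : Measurable fun h : {s : Fin T // (s : ℕ) ≤ t} → Fin d → ℝ =>
      h ⟨⟨t, Nat.lt_of_succ_lt ht⟩, le_rfl⟩ i := by
    fun_prop
  have hX : Measurable[MeasurableSpace.pi.comap (past T d t)]
      fun x : Path T d => x ⟨t, Nat.lt_of_succ_lt ht⟩ i :=
    hpresent.comp (comap_measurable (past T d t))
  have hsub := condExp_sub (hπ ⟨t + 1, ht⟩ i) (hπ ⟨t, Nat.lt_of_succ_lt ht⟩ i)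
    (MeasurableSpace.pi.comap (past T d t))
  rw [condExp_of_stronglyMeasurable (continuous_past t).measurable.comap_le hX.stronglyMeasurable
    (hπ _ i)] at hsub
  simp only [condNext, pastSigma_eq_comap_past]
  exact hsub.symm

lemma martingaleDefect_eq_sum_condExpL1Norm [IsFiniteMeasure π]
    (hπ : ∀ t i, Integrable (fun x => x t i) π) (t : ℕ) (ht : t + 1 < T) :
    martingaleDefect π t ht = ∑ i, condExpL1Norm π (past T d t) (increment t ht i) := by
  simp only [condExpL1Norm]
  rw [martingaleDefect, ← integral_finsetSum _ fun i _ => integrable_condExp.abs]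
  refine integral_congr_ae ?_
  filter_upwards [ae_all_iff.2 (condNext_sub_ae_eq_condExp_increment hπ t ht)] with x hx
  simp only [hx]

lemma martingaleDefect_add_le {π₁ π₂ : Measure (Path T d)}
    [IsFiniteMeasure π₁] [IsFiniteMeasure π₂]
    (hπ₁ : ∀ t i, Integrable (fun x => x t i) π₁) (hπ₂ : ∀ t i, Integrable (fun x => x t i) π₂)
    (a b : ℝ≥0) (t : ℕ) (ht : t + 1 < T) :
    martingaleDefect (a • π₁ + b • π₂) t ht ≤
      a * martingaleDefect π₁ t ht + b * martingaleDefect π₂ t ht := by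
  rw [martingaleDefect_eq_sum_condExpL1Norm hπ₁, martingaleDefect_eq_sum_condExpL1Norm hπ₂,
    martingaleDefect_eq_sum_condExpL1Norm fun s i =>
      (hπ₁ s i).smul_measure_nnreal.add_measure (hπ₂ s i).smul_measure_nnreal,
    Finset.mul_sum, Finset.mul_sum, ← Finset.sum_add_distrib]
  exact Finset.sum_le_sum fun i _ => condExpL1Norm_add_le (continuous_past t).measurable
    (integrable_increment hπ₁ t ht i) (integrable_increment hπ₂ t ht i) a b

lemma martSet_subset_martSetEps {ε : ℝ} (hε : 0 ≤ ε) : MartSet μ ⊆ MartSetEps μ ε := by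
  refine fun π ⟨hprob, hmarg, hmart⟩ => ⟨hprob, hmarg, fun t ht => le_of_eq_of_le ?_ hε⟩
  refine integral_eq_zero_of_ae ?_
  filter_upwards [ae_all_iff.2 (hmart t ht)] with x hx
  simp only [hx, sub_self, abs_zero, Finset.sum_const_zero, Pi.zero_apply]

lemma martSetEps_mono {ε₁ ε₂ : ℝ} (h : ε₁ ≤ ε₂) : MartSetEps μ ε₁ ⊆ MartSetEps μ ε₂ :=
  fun _ ⟨hprob, hmarg, hdefect⟩ => ⟨hprob, hmarg, fun t ht => (hdefect t ht).trans h⟩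

lemma HasMarginals.integrable_coord (hπ : HasMarginals π μ)
    (hmom : ∀ t i, Integrable (fun y : ℝ => y) (μ t i)) (t : Fin T) (i : Fin d) :
    Integrable (fun x => x t i) π :=
  (hπ t i ▸ hmom t i).comp_measurable (continuous_coord t i).measurable

lemma HasMarginals.smul_add_smul {π₁ π₂ : Measure (Path T d)} (h₁ : HasMarginals π₁ μ)
    (h₂ : HasMarginals π₂ μ) {a b : ℝ≥0} (hab : a + b = 1) :
    HasMarginals (a • π₁ + b • π₂) μ := by
  intro t i
  rw [Measure.map_add _ _ (continuous_coord t i).measurable, Measure.map_smul, Measure.map_smul,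
    h₁ t i, h₂ t i, ← add_smul, hab, one_smul]

lemma smul_add_smul_mem_martSetEps (hmom : ∀ t i, Integrable (fun y : ℝ => y) (μ t i))
    {ε₁ ε₂ : ℝ} {π₁ π₂ : Measure (Path T d)} (h₁ : π₁ ∈ MartSetEps μ ε₁)
    (h₂ : π₂ ∈ MartSetEps μ ε₂) {a b : ℝ≥0} (hab : a + b = 1) :
    a • π₁ + b • π₂ ∈ MartSetEps μ (a * ε₁ + b * ε₂) := by
  obtain ⟨hprob₁, hmarg₁, hdefect₁⟩ := h₁
  obtain ⟨hprob₂, hmarg₂, hdefect₂⟩ := h₂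
  refine ⟨⟨?_⟩, hmarg₁.smul_add_smul hmarg₂ hab, fun t ht => ?_⟩
  · simpa using mod_cast hab
  · refine (martingaleDefect_add_le (hmarg₁.integrable_coord hmom)
      (hmarg₂.integrable_coord hmom) a b t ht).trans ?_
    gcongr
    · exact hdefect₁ t ht
    · exact hdefect₂ t ht

end MartingaleDefect

section Compactness

variable {T d : ℕ} {μ : Fin T → Fin d → Measure ℝ}

/-- The weight `1 + Σ_{t,i} |x_{t,i}|`: functions of linear growth are those bounded by a multiple
of it. Its integral is the same under all measures with given marginals. -/
def pathWeight (x : Path T d) : ℝ :=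
  1 + ∑ t, ∑ i, |x t i|

lemma continuous_pathWeight : Continuous (pathWeight : Path T d → ℝ) := by
  unfold pathWeight
  fun_prop

lemma pathWeight_nonneg (x : Path T d) : 0 ≤ pathWeight x := by
  unfold pathWeight
  positivity

lemma abs_coord_le_pathWeight (x : Path T d) (t : Fin T) (i : Fin d) : |x t i| ≤ pathWeight x :=
  calc |x t i| ≤ ∑ j, |x t j| :=
        Finset.single_le_sum (f := fun j => |x t j|) (fun _ _ => abs_nonneg _) (Finset.mem_univ i)
    _ ≤ ∑ s, ∑ j, |x s j| :=
        Finset.single_le_sum (f := fun s => ∑ j, |x s j|)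
          (fun _ _ => Finset.sum_nonneg fun _ _ => abs_nonneg _) (Finset.mem_univ t)
    _ ≤ pathWeight x := le_add_of_nonneg_left zero_le_one

lemma abs_increment_le_pathWeight (t : ℕ) (ht : t + 1 < T) (i : Fin d) (x : Path T d) :
    |increment t ht i x| ≤ 2 * pathWeight x := by
  have := abs_sub (x ⟨t + 1, ht⟩ i) (x ⟨t, Nat.lt_of_succ_lt ht⟩ i)
  have := abs_coord_le_pathWeight x ⟨t + 1, ht⟩ i
  have := abs_coord_le_pathWeight x ⟨t, Nat.lt_of_succ_lt ht⟩ i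
  simp only [increment]
  linarith

lemma isCompact_pathWeight_le (r : ℝ) : IsCompact {x : Path T d | pathWeight x ≤ r} := by
  refine Metric.isCompact_of_isClosed_isBounded
    (isClosed_le continuous_pathWeight continuous_const)
    ((Metric.isBounded_closedBall (x := 0) (r := r)).subset fun x hx => ?_)
  have hr : 0 ≤ r := (pathWeight_nonneg x).trans hx
  simp only [mem_closedBall_zero_iff, pi_norm_le_iff_of_nonneg hr, Real.norm_eq_abs]
  exact fun t i => (abs_coord_le_pathWeight x t i).trans hx

section Marginals

variable {π : Measure (Path T d)} (hπ : HasMarginals π μ)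
  (hmom : ∀ t i, Integrable (fun y : ℝ => y) (μ t i))
include hπ hmom

lemma HasMarginals.integrable_pathWeight [IsFiniteMeasure π] : Integrable pathWeight π :=
  (integrable_const 1).add (integrable_finsetSum _ fun t _ => integrable_finsetSum _ fun i _ =>
    (hπ.integrable_coord hmom t i).abs)

lemma HasMarginals.integral_pathWeight [IsProbabilityMeasure π] :
    ∫ x, pathWeight x ∂π = 1 + ∑ t, ∑ i, ∫ y, |y| ∂(μ t i) := by
  have hcoord (t : Fin T) (i : Fin d) : Integrable (fun x => |x t i|) π :=
    (hπ.integrable_coord hmom t i).abs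
  have hsum (t : Fin T) : Integrable (fun x => ∑ i, |x t i|) π :=
    integrable_finsetSum _ fun i _ => hcoord t i
  have hmap (t : Fin T) (i : Fin d) : ∫ x, |x t i| ∂π = ∫ y, |y| ∂(μ t i) := by
    rw [← hπ t i, integral_map (continuous_coord t i).measurable.aemeasurable (by fun_prop)]
  simp only [pathWeight]
  rw [integral_add (integrable_const 1) (integrable_finsetSum _ fun t _ => hsum t),
    integral_finsetSum _ fun t _ => hsum t]
  simp only [integral_finsetSum _ fun i _ => hcoord _ i, hmap, integral_const, probReal_univ,
    smul_eq_mul, one_mul]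

lemma HasMarginals.integrable_of_abs_le [IsFiniteMeasure π] {f : Path T d → ℝ} (hf : Measurable f)
    {L : ℝ} (hfL : ∀ x, |f x| ≤ L * pathWeight x) : Integrable f π :=
  ((hπ.integrable_pathWeight hmom).const_mul L).mono' hf.aestronglyMeasurable (ae_of_all _ hfL)

end Marginals

/-- The set `Π(μ̌)` of measures with marginals `μ`, as a subset of the space of probability
measures, where the topology of weak convergence is available. -/
def calibrated (μ : Fin T → Fin d → Measure ℝ) : Set (ProbabilityMeasure (Path T d)) :=
  {π | HasMarginals (π : Measure (Path T d)) μ}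

/-- The set `ℳ_ε(μ̌)` as a subset of the space of probability measures with the topology of weak
convergence. -/
def weakMartSetEps (μ : Fin T → Fin d → Measure ℝ) (ε : ℝ) :
    Set (ProbabilityMeasure (Path T d)) :=
  {π | (π : Measure (Path T d)) ∈ MartSetEps μ ε}

lemma weakMartSetEps_subset_calibrated {ε : ℝ} : weakMartSetEps μ ε ⊆ calibrated μ :=
  fun _ hπ => hπ.2.1

lemma weakMartSetEps_eq_calibrated_inter (ε : ℝ) :
    weakMartSetEps μ ε = calibrated μ ∩ ⋂ (t : ℕ) (ht : t + 1 < T),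
      calibrated μ ∩ (fun π : ProbabilityMeasure (Path T d) =>
        martingaleDefect (π : Measure (Path T d)) t ht) ⁻¹' Set.Iic ε := by
  ext π
  simp only [Set.mem_inter_iff, Set.mem_iInter]
  exact ⟨fun hπ => ⟨hπ.2.1, fun t ht => ⟨hπ.2.1, hπ.2.2 t ht⟩⟩,
    fun hπ => ⟨inferInstance, hπ.1, fun t ht => (hπ.2 t ht).2⟩⟩

lemma isClosed_calibrated [hμ : ∀ t i, IsProbabilityMeasure (μ t i)] : IsClosed (calibrated μ) := by
  have heq : calibrated μ = ⋂ (t : Fin T) (i : Fin d), {π : ProbabilityMeasure (Path T d) |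
      π.map (continuous_coord t i).measurable.aemeasurable = ⟨μ t i, hμ t i⟩} := by
    ext π
    simp only [Set.mem_iInter]
    exact forall₂_congr fun t i =>
      ProbabilityMeasure.toMeasure_injective.eq_iff
        (a := π.map (continuous_coord t i).measurable.aemeasurable) (b := ⟨μ t i, hμ t i⟩)
  rw [heq]
  exact isClosed_iInter fun t => isClosed_iInter fun i =>
    isClosed_eq (ProbabilityMeasure.continuous_map (continuous_coord t i)) continuous_const

variable (hmom : ∀ t i, Integrable (fun y : ℝ => y) (μ t i))
include hmom

lemma upperSemicontinuousOn_integral_calibrated {f : Path T d → ℝ} (hf : UpperSemicontinuous f)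
    {L : ℝ} (hfL : ∀ x, |f x| ≤ L * pathWeight x) :
    UpperSemicontinuousOn (fun π : ProbabilityMeasure (Path T d) => ∫ x, f x ∂π)
      (calibrated μ) :=
  upperSemicontinuousOn_integral_of_le (C := L * (1 + ∑ t, ∑ i, ∫ y, |y| ∂(μ t i)))
    (continuous_pathWeight.const_mul L)
    (fun _ hπ => (HasMarginals.integrable_pathWeight hπ hmom).const_mul L)
    (fun _ hπ => by rw [integral_const_mul, HasMarginals.integral_pathWeight hπ hmom]) hf
    (fun _ hπ => HasMarginals.integrable_of_abs_le hπ hmom hf.measurable hfL)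
    fun x => (abs_le.1 (hfL x)).2

lemma continuousOn_integral_calibrated {f : Path T d → ℝ} (hf : Continuous f)
    {L : ℝ} (hfL : ∀ x, |f x| ≤ L * pathWeight x) :
    ContinuousOn (fun π : ProbabilityMeasure (Path T d) => ∫ x, f x ∂π) (calibrated μ) := by
  refine continuousOn_iff_lower_upperSemicontinuousOn.2 ⟨?_,
    upperSemicontinuousOn_integral_calibrated hmom hf.upperSemicontinuous hfL⟩
  have hneg := upperSemicontinuousOn_integral_calibrated hmom hf.neg.upperSemicontinuous
    fun x => (abs_neg (f x)).trans_le (hfL x)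
  simpa [Function.comp_def, integral_neg] using
    continuous_neg.comp_upperSemicontinuousOn_antitone hneg fun _ _ => neg_le_neg

lemma lowerSemicontinuousOn_martingaleDefect (t : ℕ) (ht : t + 1 < T) :
    LowerSemicontinuousOn (fun π : ProbabilityMeasure (Path T d) =>
      martingaleDefect (π : Measure (Path T d)) t ht) (calibrated μ) := by
  have hsum : LowerSemicontinuousOn (fun π : ProbabilityMeasure (Path T d) =>
      ∑ i, condExpL1Norm (π : Measure (Path T d)) (past T d t) (increment t ht i))
      (calibrated μ) :=
    lowerSemicontinuousOn_sum fun i _ => lowerSemicontinuousOn_condExpL1Norm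
      (continuous_past t).measurable
      (fun _ hπ => integrable_increment (HasMarginals.integrable_coord hπ hmom) t ht i)
      fun φ => continuousOn_integral_calibrated hmom (L := ‖φ‖ * 2)
        ((φ.continuous.comp (continuous_past t)).mul (continuous_increment t ht i)) fun x => by
          rw [abs_mul, mul_assoc]
          gcongr
          · exact φ.norm_coe_le_norm _
          · exact abs_increment_le_pathWeight t ht i x
  refine fun π hπ => LowerSemicontinuousWithinAt.congr_of_eventuallyEq (hsum π hπ) hπ ?_
  filter_upwards [self_mem_nhdsWithin] with π' hπ'
  exact (martingaleDefect_eq_sum_condExpL1Norm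
    (HasMarginals.integrable_coord hπ' hmom) t ht).symm

lemma isCompact_calibrated [∀ t i, IsProbabilityMeasure (μ t i)] : IsCompact (calibrated μ) := by
  refine (isCompact_closure_of_isTightMeasureSet ?_).of_isClosed_subset isClosed_calibrated
    subset_closure
  refine isTightMeasureSet_of_integral_le pathWeight_nonneg isCompact_pathWeight_le
    (C := 1 + ∑ t, ∑ i, ∫ y, |y| ∂(μ t i)) ?_ ?_
  · rintro _ ⟨π, hπ, rfl⟩
    exact HasMarginals.integrable_pathWeight hπ hmom
  · rintro _ ⟨π, hπ, rfl⟩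
    exact (HasMarginals.integral_pathWeight hπ hmom).le

lemma isCompact_weakMartSetEps [∀ t i, IsProbabilityMeasure (μ t i)] (ε : ℝ) :
    IsCompact (weakMartSetEps μ ε) := by
  rw [weakMartSetEps_eq_calibrated_inter]
  refine (isCompact_calibrated hmom).inter_right <|
    isClosed_iInter fun t => isClosed_iInter fun ht => ?_
  exact ((lowerSemicontinuousOn_martingaleDefect hmom t ht).isCompact_inter_preimage_Iic
    (isCompact_calibrated hmom) ε).isClosed

end Compactness

section OptimalValue

variable {T d : ℕ} {μ : Fin T → Fin d → Measure ℝ} {c : Path T d → ℝ}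

lemma isGreatest_primalVals [∀ t i, IsProbabilityMeasure (μ t i)]
    (hmom : ∀ t i, Integrable (fun y : ℝ => y) (μ t i)) (hc : UpperSemicontinuous c)
    {K : ℝ} (hcK : ∀ x, |c x| ≤ K * pathWeight x) {ε : ℝ} (hne : (MartSetEps μ ε).Nonempty) :
    IsGreatest (primalVals c (MartSetEps μ ε)) (PbarEps μ c ε) := by
  have hne' : (weakMartSetEps μ ε).Nonempty :=
    hne.elim fun π hπ => ⟨⟨π, hπ.1⟩, hπ⟩
  obtain ⟨π, hπ, hmax⟩ := ((upperSemicontinuousOn_integral_calibrated hmom hc hcK).mono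
    weakMartSetEps_subset_calibrated).exists_isMaxOn hne' (isCompact_weakMartSetEps hmom ε)
  have hgreatest : IsGreatest (primalVals c (MartSetEps μ ε)) (∫ x, c x ∂π) := by
    refine ⟨⟨π, hπ, HasMarginals.integrable_of_abs_le hπ.2.1 hmom hc.measurable hcK, rfl⟩, ?_⟩
    rintro _ ⟨π', hπ', -, rfl⟩
    exact hmax (show (⟨π', hπ'.1⟩ : ProbabilityMeasure (Path T d)) ∈ weakMartSetEps μ ε from hπ')
  rwa [PbarEps, hgreatest.csSup_eq]

lemma monotoneOn_pbarEps {s : Set ℝ}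
    (hmax : ∀ ε ∈ s, IsGreatest (primalVals c (MartSetEps μ ε)) (PbarEps μ c ε)) :
    MonotoneOn (PbarEps μ c) s := by
  intro ε₁ hε₁ ε₂ hε₂ hε
  obtain ⟨π, hπ, hint, hval⟩ := (hmax ε₁ hε₁).1
  exact (hmax ε₂ hε₂).2 ⟨π, martSetEps_mono hε hπ, hint, hval⟩

lemma concaveOn_pbarEps (hmom : ∀ t i, Integrable (fun y : ℝ => y) (μ t i)) {s : Set ℝ}
    (hs : Convex ℝ s)
    (hmax : ∀ ε ∈ s, IsGreatest (primalVals c (MartSetEps μ ε)) (PbarEps μ c ε)) :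
    ConcaveOn ℝ s (PbarEps μ c) := by
  refine ⟨hs, fun ε₁ hε₁ ε₂ hε₂ a b ha hb hab => ?_⟩
  have hε := hs hε₁ hε₂ ha hb hab
  lift a to ℝ≥0 using ha
  lift b to ℝ≥0 using hb
  obtain ⟨π₁, hπ₁, hint₁, hval₁⟩ := (hmax ε₁ hε₁).1
  obtain ⟨π₂, hπ₂, hint₂, hval₂⟩ := (hmax ε₂ hε₂).1
  refine (hmax _ hε).2 ⟨a • π₁ + b • π₂,
    smul_add_smul_mem_martSetEps hmom hπ₁ hπ₂ (mod_cast hab),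
    hint₁.smul_measure_nnreal.add_measure hint₂.smul_measure_nnreal, ?_⟩
  rw [integral_add_measure hint₁.smul_measure_nnreal hint₂.smul_measure_nnreal,
    integral_smul_nnreal_measure, integral_smul_nnreal_measure, ← hval₁, ← hval₂]
  rfl

lemma mem_martSetEps_of_forall_add_one_div {π : Measure (Path T d)} {ε : ℝ}
    (hπ : ∀ n : ℕ, π ∈ MartSetEps μ (ε + 1 / (n + 1))) : π ∈ MartSetEps μ ε := by
  have hlim : Tendsto (fun n : ℕ => ε + 1 / ((n : ℝ) + 1)) atTop (𝓝 ε) := by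
    simpa using tendsto_one_div_add_atTop_nhds_zero_nat.const_add ε
  exact ⟨(hπ 0).1, (hπ 0).2.1, fun t ht => ge_of_tendsto' hlim fun n => (hπ n).2.2 t ht⟩

lemma exists_gt_pbarEps_lt [∀ t i, IsProbabilityMeasure (μ t i)]
    (hmom : ∀ t i, Integrable (fun y : ℝ => y) (μ t i)) (hc : UpperSemicontinuous c)
    {K : ℝ} (hcK : ∀ x, |c x| ≤ K * pathWeight x) {ε : ℝ}
    (hmax : ∀ ε' ≥ ε, IsGreatest (primalVals c (MartSetEps μ ε')) (PbarEps μ c ε'))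
    {r : ℝ} (hr : PbarEps μ c ε < r) : ∃ ε' > ε, PbarEps μ c ε' < r := by
  by_contra! hle
  let A (n : ℕ) : Set (ProbabilityMeasure (Path T d)) :=
    weakMartSetEps μ (ε + 1 / (n + 1)) ∩ (fun π => ∫ x, c x ∂π) ⁻¹' Set.Ici r
  have hcompact (n : ℕ) : IsCompact (A n) :=
    ((upperSemicontinuousOn_integral_calibrated hmom hc hcK).mono
      weakMartSetEps_subset_calibrated).isCompact_inter_preimage_Ici
      (isCompact_weakMartSetEps hmom _) r
  have hnonempty (n : ℕ) : (A n).Nonempty := by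
    have hn : ε < ε + 1 / (n + 1) := lt_add_of_pos_right ε Nat.one_div_pos_of_nat
    obtain ⟨π, hπ, -, hval⟩ := (hmax _ hn.le).1
    exact ⟨⟨π, hπ.1⟩, hπ, (hle _ hn).trans_eq hval⟩
  have hanti (n : ℕ) : A (n + 1) ⊆ A n :=
    Set.inter_subset_inter_left _ fun _ hπ => martSetEps_mono
      (add_le_add_right (Nat.one_div_le_one_div n.le_succ) ε) hπ
  obtain ⟨π, hπ⟩ := IsCompact.nonempty_iInter_of_sequence_nonempty_isCompact_isClosed A hanti
    hnonempty (hcompact 0) fun n => (hcompact n).isClosed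
  rw [Set.mem_iInter] at hπ
  have hπε : (π : Measure (Path T d)) ∈ MartSetEps μ ε :=
    mem_martSetEps_of_forall_add_one_div fun n => (hπ n).1
  have hval : ∫ x, c x ∂π ≤ PbarEps μ c ε := (hmax ε le_rfl).2
    ⟨π, hπε, HasMarginals.integrable_of_abs_le hπε.2.1 hmom hc.measurable hcK, rfl⟩
  exact (hr.trans_le (hπ 0).2).not_ge hval

end OptimalValue

/-- Proposition: regularity of .
If the cost `c` is measurable, of linear growth and upper semi-continuous, and `ℳ(μ̌) ≠ ∅`,
then `ε ↦ P̄_ε(μ̌)` is non-decreasing, continuous and concave on `ℝ₊`. -/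
theorem pbarEps_monotone_continuous_concave {T d : ℕ}
    (μ : Fin T → Fin d → Measure ℝ)
    (hprob : ∀ t i, IsProbabilityMeasure (μ t i))
    (hmom : ∀ t i, Integrable (fun y : ℝ => y) (μ t i))
    (hne : (MartSet μ).Nonempty)
    (c : Path T d → ℝ) (hmeas : Measurable c)
    (K : ℝ) (hgrowth : ∀ x, |c x| ≤ K * (1 + ∑ t, ∑ i, |x t i|))
    (husc : UpperSemicontinuous c) :
    MonotoneOn (fun ε => PbarEps μ c ε) (Set.Ici 0) ∧
    ContinuousOn (fun ε => PbarEps μ c ε) (Set.Ici 0) ∧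
    ConcaveOn ℝ (Set.Ici 0) (fun ε => PbarEps μ c ε) := by
  have hmax : ∀ ε ∈ Set.Ici (0 : ℝ),
      IsGreatest (primalVals c (MartSetEps μ ε)) (PbarEps μ c ε) := fun ε hε =>
    isGreatest_primalVals hmom husc hgrowth (hne.mono (martSet_subset_martSetEps hε))
  have hmono := monotoneOn_pbarEps hmax
  have hconc := concaveOn_pbarEps hmom (convex_Ici 0) hmax
  exact ⟨hmono, continuousOn_Ici_of_concaveOn_of_monotoneOn hconc hmono fun r hr =>
    exists_gt_pbarEps_lt hmom husc hgrowth hmax hr, hconc⟩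

end MMOT
end
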